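/- Let χ : K^× → ℤ/2ℤ be a group homomorphism and n ≥ 1 an integer such that χ vanishes on U_{n+1} but does not vanish identically on U_n, and suppose χ(π) = 0. Suppose v(e₁ − e₂) = 2n and χ(e₁) = 0. Then there exists x ∈ K ∖ {0, e₁, e₂} with χ(x) = 1, χ(x − e₁) = 0 and χ(x − e₂) = 1; in particular χ(x(x−e₁)(x−e₂)) = 0. -/

import Mathlib

/-- An additively written, normalized (i.e. surjective onto `ℤ`) discrete
valuation on a field `K`.  All axioms are imposed at nonzero arguments only,
so the value of `v` at `0` is irrelevant.  For a finite extension `K` of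
`ℚ_[p]`, the normalized valuation `v : K^× → ℤ` of the paper is such a
structure. -/
structure DValuation (K : Type*) [Field K] where
  /-- the valuation map -/
  v : K → ℤ
  v_mul : ∀ ⦃x y : K⦄, x ≠ 0 → y ≠ 0 → v (x * y) = v x + v y
  min_le_v_add : ∀ ⦃x y : K⦄, x ≠ 0 → y ≠ 0 → x + y ≠ 0 → min (v x) (v y) ≤ v (x + y)
  v_surj : ∀ m : ℤ, ∃ x : K, x ≠ 0 ∧ v x = m

namespace DValuation

variable {K : Type*} [Field K] (w : DValuation K)

/-- `u ∈ U_m` : `u` is (a unit) congruent to `1` modulo `𝔭^m`; for `m ≥ 1`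
this forces `v u = 0`, i.e. `u ∈ 𝔬^×`. -/
def IsUnit₁ (m : ℤ) (u : K) : Prop :=
  u = 1 ∨ m ≤ w.v (u - 1)

end DValuation

/-!
Dividing by `e₁`, which changes neither `χ` nor the valuation, we look for `x = e₁ (1 + y)`. Put
`ϖ = πⁿ` and `d = (e₁ - e₂) / e₁ = ϖ² c` with `c` a unit, and try `y = ϖ s²` with `s` a unit: then
`χ y = 0` and `y + d = y (1 + ϖ c / s²)`. Since `χ` is trivial on `U_{n+1}` but not on `U_n`, the
map `a ↦ χ (1 + ϖ a)` induces a nonzero additive character `ψ` of the residue field `k`, and what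
remains is to find `t = s²` in `kˣ` with `ψ t = 1 = ψ (c / t)`. Every element of `k` is a square.
If no such `t` existed, `t ↦ c / t` would inject the complement of the kernel of `ψ` into the
nonzero elements of that kernel; but a proper subgroup of a finite group has at most as many
elements as its complement.

That `k` is finite follows from the flatness of the valuation ring over `ℤ_p`: lifts of linearly
independent residue classes are linearly independent.
-/

open IsLocalRing WithZero

section ResidueField

variable {R S : Type*} [CommRing R] [IsLocalRing R] [CommRing S] [IsLocalRing S] [Algebra R S]
  [IsLocalHom (algebraMap R S)] [Module.Flat R S]

theorem linearIndependent_of_linearIndependent_residue {ι : Type*} {b : ι → S}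
    (hb : LinearIndependent (ResidueField R) (residue S ∘ b)) : LinearIndependent R b :=
  let residueₗ : S →ₗ[R] ResidueField S := (IsScalarTower.toAlgHom R S (ResidueField S)).toLinearMap
  Module.IsLocalRing.linearIndependent_of_flat b <|
    LinearIndependent.of_comp (residueₗ.liftBaseChange (ResidueField R)) <| by
      convert hb using 1
      ext i
      simp [residueₗ]

variable (R S) in
theorem rank_residueField_le : Module.rank (ResidueField R) (ResidueField S) ≤ Module.rank R S := by
  let b := Module.Free.chooseBasis (ResidueField R) (ResidueField S)
  choose lift hlift using residue_surjective (R := S)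
  have hindep : LinearIndependent R (lift ∘ b) := by
    apply linearIndependent_of_linearIndependent_residue
    convert b.linearIndependent using 1
    ext i
    exact hlift (b i)
  exact b.mk_eq_rank''.ge.trans hindep.cardinal_le_rank

theorem finite_residueField_of_rank_lt_aleph0 [Finite (ResidueField R)]
    (hrank : Module.rank R S < Cardinal.aleph0) : Finite (ResidueField S) :=
  have : Module.Finite (ResidueField R) (ResidueField S) :=
    Module.rank_lt_aleph0_iff.1 ((rank_residueField_le R S).trans_lt hrank)
  Module.finite_of_finite (ResidueField R)

end ResidueField

section PadicExtension

variable {K : Type*} [Field K]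

theorem valuationSubring_eq_top_of_forall_algebraMap_mem {F : Type*} [Field F] [Algebra F K]
    [Algebra.IsAlgebraic F K] {A : ValuationSubring K} (hA : ∀ x : F, algebraMap F K x ∈ A) :
    A = ⊤ := by
  let B : Subalgebra F K := { A.toSubring with algebraMap_mem' := hA }
  refine eq_top_iff.2 fun x _ ↦ (A.mem_or_inv_mem x).elim id fun hx ↦ ?_
  have hinv : (x⁻¹)⁻¹ ∈ B :=
    B.inv_mem_of_algebraic (x := ⟨x⁻¹, hx⟩) (Algebra.IsAlgebraic.isAlgebraic x⁻¹)
  rwa [inv_inv] at hinv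

variable {p : ℕ} [Fact p.Prime] [Algebra ℚ_[p] K] {A : ValuationSubring K}

/-- The inclusion `ℤ_p → A` into a valuation subring `A` of an extension of `ℚ_p` that cuts out
`ℤ_p` on `ℚ_p`, through which `A` is regarded as a local extension of `ℤ_p`. -/
noncomputable def padicIntInclusion (hA : ∀ x : ℚ_[p], algebraMap ℚ_[p] K x ∈ A ↔ ‖x‖ ≤ 1) :
    ℤ_[p] →+* A :=
  ((algebraMap ℚ_[p] K).comp PadicInt.Coe.ringHom).codRestrict A.toSubring fun x ↦
    (hA x).2 x.norm_le_one

theorem isLocalHom_padicIntInclusion (hA : ∀ x : ℚ_[p], algebraMap ℚ_[p] K x ∈ A ↔ ‖x‖ ≤ 1) :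
    IsLocalHom (padicIntInclusion hA) where
  map_nonunit x hx := by
    obtain ⟨y, hxy⟩ := hx.exists_right_inv
    have hinv : algebraMap ℚ_[p] K (x : ℚ_[p])⁻¹ = y := by
      rw [map_inv₀]
      exact inv_eq_of_mul_eq_one_right (congrArg Subtype.val hxy)
    have hx0 : (x : ℚ_[p]) ≠ 0 := by
      rw [PadicInt.coe_ne_zero]
      rintro rfl
      simp at hx
    have hnorm : ‖(x : ℚ_[p])⁻¹‖ ≤ 1 := (hA _).1 (hinv ▸ y.2)
    rw [norm_inv, inv_le_one₀ (norm_pos_iff.2 hx0)] at hnorm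
    exact PadicInt.isUnit_iff.2 (x.norm_le_one.antisymm hnorm)

theorem charP_residueField_of_algebraMap_mem_iff
    (hA : ∀ x : ℚ_[p], algebraMap ℚ_[p] K x ∈ A ↔ ‖x‖ ≤ 1) : CharP (ResidueField A) p :=
  have := isLocalHom_padicIntInclusion hA
  charP_of_injective_ringHom ((ResidueField.map (padicIntInclusion hA)).comp
    PadicInt.residueField.symm.toRingHom).injective p

theorem finite_residueField_of_algebraMap_mem_iff [FiniteDimensional ℚ_[p] K]
    (hA : ∀ x : ℚ_[p], algebraMap ℚ_[p] K x ∈ A ↔ ‖x‖ ≤ 1) : Finite (ResidueField A) := by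
  let _ : Algebra ℤ_[p] A := (padicIntInclusion hA).toAlgebra
  let _ : Algebra ℤ_[p] K := ((algebraMap ℚ_[p] K).comp (algebraMap ℤ_[p] ℚ_[p])).toAlgebra
  have : IsScalarTower ℤ_[p] ℚ_[p] K := .of_algebraMap_eq' rfl
  have : IsScalarTower ℤ_[p] A K := .of_algebraMap_eq' rfl
  have : IsLocalHom (algebraMap ℤ_[p] A) := isLocalHom_padicIntInclusion hA
  have : Module.IsTorsionFree ℤ_[p] A := Module.isTorsionFree_iff_algebraMap_injective.2 <|
    .of_comp (f := algebraMap A K) <|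
      (algebraMap ℚ_[p] K).injective.comp (IsFractionRing.injective ℤ_[p] ℚ_[p])
  have : Finite (ResidueField ℤ_[p]) := .of_equiv _ PadicInt.residueField.symm.toEquiv
  apply finite_residueField_of_rank_lt_aleph0 (R := ℤ_[p])
  calc Module.rank ℤ_[p] A
      ≤ Module.rank ℤ_[p] K := (IsScalarTower.toAlgHom ℤ_[p] A K).toLinearMap.rank_le_of_injective
        Subtype.val_injective
    _ = Module.rank ℚ_[p] K := (IsLocalization.rank_eq ℚ_[p] _ le_rfl).symm
    _ < Cardinal.aleph0 := Module.rank_lt_aleph0 ℚ_[p] K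

end PadicExtension

section Counting

theorem exists_notMem_div_notMem {k : Type*} [DivisionRing k] [Finite k] {H : AddSubgroup k}
    (hH : H ≠ ⊤) {c : k} (hc : c ≠ 0) : ∃ t ∉ H, c / t ∉ H := by
  by_contra! hdiv
  obtain ⟨t₀, ht₀⟩ : ∃ t, t ∉ H := by simpa [AddSubgroup.eq_top_iff'] using hH
  have hcard_le : (H : Set k).ncard ≤ (H : Set k)ᶜ.ncard :=
    Set.ncard_le_ncard_of_injOn (t₀ + ·) (fun h hh ↦ by simpa [H.add_mem_cancel_right hh])
      (add_right_injective t₀).injOn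
  have hcard_compl_le : (H : Set k)ᶜ.ncard ≤ ((H : Set k) \ {0}).ncard :=
    Set.ncard_le_ncard_of_injOn (c / ·)
      (fun t ht ↦ ⟨hdiv t ht, div_ne_zero hc fun h0 ↦ ht (h0 ▸ H.zero_mem)⟩)
      fun _ _ _ _ h ↦ by simpa [div_eq_mul_inv, hc] using h
  exact (hcard_le.trans hcard_compl_le).not_gt
    (Set.ncard_sdiff_singleton_lt_of_mem H.zero_mem)

theorem exists_units_map_sq_ne_zero {A G : Type*} [CommRing A] [IsLocalRing A]
    [Finite (ResidueField A)] [CharP (ResidueField A) 2] [AddGroup G] {ψ : A →+ G} (hψ : ψ ≠ 0)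
    (hψm : ∀ a ∈ maximalIdeal A, ψ a = 0) (c : Aˣ) :
    ∃ s : Aˣ, ψ (s ^ 2) ≠ 0 ∧ ψ (c * (↑s⁻¹) ^ 2) ≠ 0 := by
  let H : AddSubgroup (ResidueField A) := ψ.ker.map (residue A).toAddMonoidHom
  have mem_H {a : A} : residue A a ∈ H ↔ ψ a = 0 := by
    refine ⟨?_, fun ha ↦ ⟨a, ha, rfl⟩⟩
    rintro ⟨b, hb, hba⟩
    have hsub : ψ (a - b) = 0 := hψm _ <| (residue_eq_zero_iff _).1 <| by
      rw [map_sub, sub_eq_zero]; exact hba.symm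
    rwa [map_sub, AddMonoidHom.mem_ker.1 hb, sub_zero] at hsub
  have hH : H ≠ ⊤ := fun htop ↦ hψ <| AddMonoidHom.ext fun a ↦
    mem_H.1 (htop ▸ AddSubgroup.mem_top _)
  obtain ⟨t, htH, hctH⟩ :=
    exists_notMem_div_notMem hH (residue_ne_zero_iff_isUnit _ |>.2 c.isUnit)
  obtain ⟨r, rfl⟩ := FiniteField.isSquare_of_char_two (ringChar.eq_iff.2 ‹_›) t
  have hr : r ≠ 0 := by rintro rfl; exact htH (by simp)
  obtain ⟨a, rfl⟩ := residue_surjective r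
  obtain ⟨s, rfl⟩ := (residue_ne_zero_iff_isUnit a).1 hr
  refine ⟨s, fun h ↦ htH ?_, fun h ↦ hctH ?_⟩
  · simpa [sq] using mem_H.2 h
  · simpa [sq, div_eq_mul_inv] using mem_H.2 h

end Counting

section Valuation

variable {K Γ₀ : Type*} [Field K] [LinearOrderedCommGroupWithZero Γ₀] {v : Valuation K Γ₀}

theorem map_pow_eq_nsmul {G : Type*} [AddGroup G] {χ : K → G}
    (hχ : ∀ ⦃x y : K⦄, x ≠ 0 → y ≠ 0 → χ (x * y) = χ x + χ y) {x : K} (hx : x ≠ 0) (n : ℕ) :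
    χ (x ^ n) = n • χ x := by
  induction n with
  | zero => simpa using hχ one_ne_zero one_ne_zero
  | succ n ih => rw [pow_succ, hχ (pow_ne_zero n hx) hx, ih, succ_nsmul]

theorem map_eq_map_of_valuation_sub_lt {G : Type*} [AddZeroClass G] {χ : K → G}
    (hχ : ∀ ⦃x y : K⦄, x ≠ 0 → y ≠ 0 → χ (x * y) = χ x + χ y) {r : Γ₀}
    (hvan : ∀ u, v (u - 1) < r → χ u = 0) {x y : K} (hx : x ≠ 0) (hy : y ≠ 0)
    (hxy : v (x - y) < r * v y) : χ x = χ y := by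
  have hquot : χ (x / y) = 0 := hvan _ <| by
    rwa [← div_self hy, ← sub_div, map_div₀, div_lt_iff₀ (zero_lt_iff.2 <| v.ne_zero_iff.2 hy)]
  rw [← div_mul_cancel₀ x hy, hχ (div_ne_zero hx hy) hy, hquot, zero_add]

theorem valuation_one_add_mul_eq_one {ϖ : K} (hϖ : v ϖ < 1) (a : v.valuationSubring) :
    v (1 + ϖ * a) = 1 :=
  v.map_one_add_of_lt <| by
    rw [map_mul]
    exact (mul_le_of_le_one_right' a.2).trans_lt hϖ

theorem one_add_mul_ne_zero_of_valuation_lt_one {ϖ : K} (hϖ : v ϖ < 1) (a : v.valuationSubring) :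
    1 + ϖ * (a : K) ≠ 0 :=
  v.ne_zero_iff.1 (valuation_one_add_mul_eq_one hϖ a ▸ one_ne_zero)

section ConductorHom

variable {G : Type*} [AddGroup G] {χ : K → G}
  (hχ : ∀ ⦃x y : K⦄, x ≠ 0 → y ≠ 0 → χ (x * y) = χ x + χ y)
  {ϖ : K} (hϖ0 : ϖ ≠ 0) (hϖ : v ϖ < 1) (hvan : ∀ u, v (u - 1) < v ϖ → χ u = 0)

/-- The additive character `a ↦ χ (1 + ϖ a)` of the valuation ring attached to a multiplicative
character `χ` that is trivial on `1 + ϖ𝔭`. -/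
def additiveCharacter : v.valuationSubring →+ G :=
  AddMonoidHom.mk' (fun a ↦ χ (1 + ϖ * a)) fun a b ↦ by
    have ne_zero := one_add_mul_ne_zero_of_valuation_lt_one (v := v) hϖ
    rw [← hχ (ne_zero a) (ne_zero b)]
    refine map_eq_map_of_valuation_sub_lt hχ hvan (ne_zero _)
      (mul_ne_zero (ne_zero a) (ne_zero b)) ?_
    have hab : v (a * b : K) ≤ 1 := (a * b).2
    have hdiff : 1 + ϖ * ((a + b : v.valuationSubring) : K) - (1 + ϖ * a) * (1 + ϖ * b) =
        -(ϖ * ϖ * (a * b)) := by push_cast; ring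
    rw [hdiff, v.map_neg, map_mul, map_mul v ϖ, map_mul v (1 + _),
      valuation_one_add_mul_eq_one hϖ, valuation_one_add_mul_eq_one hϖ, mul_one, mul_one]
    exact (mul_le_of_le_one_right' hab).trans_lt
      (mul_lt_of_lt_one_right (zero_lt_iff.2 (v.ne_zero_iff.2 hϖ0)) hϖ)

theorem additiveCharacter_apply (a : v.valuationSubring) :
    additiveCharacter hχ hϖ0 hϖ hvan a = χ (1 + ϖ * a) := rfl

theorem additiveCharacter_eq_zero_of_mem_maximalIdeal {a : v.valuationSubring}
    (ha : a ∈ maximalIdeal v.valuationSubring) : additiveCharacter hχ hϖ0 hϖ hvan a = 0 :=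
  hvan _ <| by
    rw [add_sub_cancel_left, map_mul]
    exact mul_lt_of_lt_one_right (zero_lt_iff.2 (v.ne_zero_iff.2 hϖ0)) (v.mem_maximalIdeal_iff.1 ha)

theorem additiveCharacter_ne_zero (hnonvan : ∃ u, v (u - 1) ≤ v ϖ ∧ χ u ≠ 0) :
    additiveCharacter hχ hϖ0 hϖ hvan ≠ 0 := by
  obtain ⟨u, hu, hχu⟩ := hnonvan
  have hquot : v ((u - 1) / ϖ) ≤ 1 := by
    rw [map_div₀]
    exact div_le_one_of_le₀ hu zero_le
  intro hzero
  have := DFunLike.congr_fun hzero ⟨_, hquot⟩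
  rw [additiveCharacter_apply, mul_div_cancel₀ _ hϖ0, add_sub_cancel] at this
  exact hχu this

end ConductorHom

theorem exists_map_one_add_eq_one_and_map_add_eq_one [Finite (ResidueField v.valuationSubring)]
    [CharP (ResidueField v.valuationSubring) 2] {χ : K → ZMod 2}
    (hχ : ∀ ⦃x y : K⦄, x ≠ 0 → y ≠ 0 → χ (x * y) = χ x + χ y) {ϖ : K} (hϖ0 : ϖ ≠ 0)
    (hϖ : v ϖ < 1) (hχϖ : χ ϖ = 0) (hvan : ∀ u, v (u - 1) < v ϖ → χ u = 0)
    (hnonvan : ∃ u, v (u - 1) ≤ v ϖ ∧ χ u ≠ 0) {d : K} (hd : v d = v ϖ ^ 2) :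
    ∃ y, y ≠ 0 ∧ 1 + y ≠ 0 ∧ y + d ≠ 0 ∧ χ y = 0 ∧ χ (1 + y) = 1 ∧ χ (y + d) = 1 := by
  have eq_one_of_ne_zero : ∀ z : ZMod 2, z ≠ 0 → z = 1 := by decide
  have hc : v (d / ϖ ^ 2) = 1 := by
    rw [map_div₀, map_pow, hd, div_self (pow_ne_zero 2 (v.ne_zero_iff.2 hϖ0))]
  obtain ⟨c, hcd⟩ : IsUnit (⟨d / ϖ ^ 2, hc.le⟩ : v.valuationSubring) :=
    (Valuation.valuationSubring.integers v).isUnit_iff_valuation_eq_one.2 hc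
  obtain ⟨s, hs, hcs⟩ := exists_units_map_sq_ne_zero
    (additiveCharacter_ne_zero hχ hϖ0 hϖ hvan hnonvan)
    (fun _ ↦ additiveCharacter_eq_zero_of_mem_maximalIdeal hχ hϖ0 hϖ hvan) c
  let y : K := ϖ * (s : v.valuationSubring) ^ 2
  let z : v.valuationSubring := c * (↑s⁻¹) ^ 2
  have hs_inv : ((s : v.valuationSubring) : K) * ((s⁻¹ : v.valuationSubringˣ) : v.valuationSubring)
      = 1 := congrArg Subtype.val s.mul_inv
  have hs0 : ((s : v.valuationSubring) : K) ≠ 0 := left_ne_zero_of_mul_eq_one hs_inv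
  have hy0 : y ≠ 0 := mul_ne_zero hϖ0 (pow_ne_zero 2 hs0)
  have hχy : χ y = 0 := by
    rw [hχ hϖ0 (pow_ne_zero 2 hs0), map_pow_eq_nsmul hχ hs0, hχϖ, CharTwo.two_nsmul, add_zero]
  have hfactor : y + d = y * (1 + ϖ * z) := by
    have hd_eq : d = ϖ ^ 2 * (c : v.valuationSubring) := by
      rw [hcd]; exact (mul_div_cancel₀ d (pow_ne_zero 2 hϖ0)).symm
    simp only [y, z, hd_eq, MulMemClass.coe_mul, SubmonoidClass.coe_pow]
    linear_combination -ϖ ^ 2 * (c : v.valuationSubring) *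
      ((s : v.valuationSubring) * ((s⁻¹ : v.valuationSubringˣ) : v.valuationSubring) + 1) * hs_inv
  have hz0 : 1 + ϖ * (z : K) ≠ 0 := one_add_mul_ne_zero_of_valuation_lt_one hϖ z
  refine ⟨y, hy0, one_add_mul_ne_zero_of_valuation_lt_one hϖ (s ^ 2 : v.valuationSubring),
    hfactor ▸ mul_ne_zero hy0 hz0, hχy, eq_one_of_ne_zero _ hs, ?_⟩
  rw [hfactor, hχ hy0 hz0, hχy, zero_add]
  exact eq_one_of_ne_zero _ hcs

end Valuation

namespace DValuation

variable {K : Type*} [Field K] (w : DValuation K)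

theorem v_one : w.v 1 = 0 := by
  simpa using w.v_mul one_ne_zero one_ne_zero

open Classical in
/-- The multiplicative valuation with the same valuation ring, in Mathlib's convention
`x ↦ exp (-v x)`; in contrast to `w.v`, its value at `0` is meaningful. -/
noncomputable def toValuation : Valuation K ℤᵐ⁰ where
  toFun x := if x = 0 then 0 else exp (-w.v x)
  map_zero' := if_pos rfl
  map_one' := by simp [v_one]
  map_mul' x y := by
    by_cases hx : x = 0
    · simp [hx]
    by_cases hy : y = 0
    · simp [hy]
    simp only [hx, hy, mul_eq_zero, or_self, if_false, w.v_mul hx hy, neg_add, exp_add]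
  map_add_le_max' x y := by
    by_cases hx : x = 0
    · simp [hx]
    by_cases hy : y = 0
    · simp [hy]
    by_cases hxy : x + y = 0
    · simp [hxy]
    have := w.min_le_v_add hx hy hxy
    simp only [hx, hy, hxy, if_false, le_max_iff, exp_le_exp]
    omega

theorem toValuation_apply {x : K} (hx : x ≠ 0) : w.toValuation x = exp (-w.v x) := if_neg hx

theorem toValuation_le_exp_neg_iff {m : ℤ} {x : K} :
    w.toValuation x ≤ exp (-m) ↔ x = 0 ∨ m ≤ w.v x := by
  by_cases hx : x = 0
  · simp [hx]
  · rw [w.toValuation_apply hx, exp_le_exp, neg_le_neg_iff, or_iff_right hx]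

theorem isUnit₁_iff_toValuation_le {m : ℤ} {u : K} :
    w.IsUnit₁ m u ↔ w.toValuation (u - 1) ≤ exp (-m) := by
  rw [toValuation_le_exp_neg_iff, sub_eq_zero, IsUnit₁]

theorem isUnit₁_add_one_iff_toValuation_lt {m : ℤ} {u : K} :
    w.IsUnit₁ (m + 1) u ↔ w.toValuation (u - 1) < exp (-m) := by
  rw [isUnit₁_iff_toValuation_le, neg_add, exp_add, ← lt_mul_exp_iff_le (by simp),
    mul_assoc, ← exp_add]
  simp

variable {w}

theorem IsUnit₁.toValuation_eq_one {u : K} (hu : w.IsUnit₁ 1 u) : w.toValuation u = 1 := by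
  have hlt : w.toValuation (u - 1) < 1 := by
    simpa using w.isUnit₁_add_one_iff_toValuation_lt (m := 0).1 hu
  simpa using w.toValuation.map_one_add_of_lt hlt

theorem IsUnit₁.ne_zero {u : K} (hu : w.IsUnit₁ 1 u) : u ≠ 0 :=
  w.toValuation.ne_zero_iff.1 (hu.toValuation_eq_one ▸ one_ne_zero)

theorem IsUnit₁.v_eq_zero {u : K} (hu : w.IsUnit₁ 1 u) : w.v u = 0 := by
  simpa [w.toValuation_apply hu.ne_zero] using hu.toValuation_eq_one

section Padic

variable {p : ℕ} [Fact p.Prime] [Algebra ℚ_[p] K] [Algebra.IsAlgebraic ℚ_[p] K]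

theorem v_prime_pos
    (hext : ∀ x : ℚ_[p], x ≠ 0 →
      w.v (algebraMap ℚ_[p] K x) = w.v (algebraMap ℚ_[p] K p) * x.valuation) :
    0 < w.v (algebraMap ℚ_[p] K p) := by
  have hp0 : algebraMap ℚ_[p] K p ≠ 0 :=
    (map_ne_zero _).2 (Nat.cast_ne_zero.2 (Fact.out : p.Prime).ne_zero)
  have mem_iff {x : K} (hx : x ≠ 0) : x ∈ w.toValuation.valuationSubring ↔ 0 ≤ w.v x := by
    simpa [hx] using w.toValuation_le_exp_neg_iff (m := 0) (x := x)
  have hnonneg : 0 ≤ w.v (algebraMap ℚ_[p] K p) :=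
    (mem_iff hp0).1 (by simp [natCast_mem])
  refine hnonneg.lt_of_ne' fun hzero ↦ ?_
  have htop : w.toValuation.valuationSubring = ⊤ :=
    valuationSubring_eq_top_of_forall_algebraMap_mem (F := ℚ_[p]) fun x ↦ by
      by_cases hx : x = 0
      · simp [hx]
      · rw [mem_iff (by simpa), hext x hx, hzero, zero_mul]
  obtain ⟨x, hx, hvx⟩ := w.v_surj (-1)
  have := (mem_iff hx).1 (htop ▸ ValuationSubring.mem_top x)
  omega

theorem algebraMap_mem_valuationSubring_iff
    (hext : ∀ x : ℚ_[p], x ≠ 0 →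
      w.v (algebraMap ℚ_[p] K x) = w.v (algebraMap ℚ_[p] K p) * x.valuation)
    (x : ℚ_[p]) :
    algebraMap ℚ_[p] K x ∈ w.toValuation.valuationSubring ↔ ‖x‖ ≤ 1 := by
  by_cases hx : x = 0
  · simp [hx]
  rw [Padic.norm_le_one_iff_val_nonneg, Valuation.mem_valuationSubring_iff, ← exp_zero, ← neg_zero,
    toValuation_le_exp_neg_iff, hext x hx, mul_nonneg_iff_of_pos_left (v_prime_pos hext)]
  simp [hx]

end Padic

end DValuation

theorem chatelet_case_iii_valuation_two_n_general
    {K : Type*} [Field K] (w : DValuation K)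
    [Finite (ResidueField w.toValuation.valuationSubring)]
    [CharP (ResidueField w.toValuation.valuationSubring) 2]
    {π : K} (hπ0 : π ≠ 0) (hπ : w.v π = 1) {χ : K → ZMod 2}
    (hχ : ∀ ⦃x y : K⦄, x ≠ 0 → y ≠ 0 → χ (x * y) = χ x + χ y) {n : ℕ} (hn : 1 ≤ n)
    (hvan : ∀ u : K, w.IsUnit₁ ((n : ℤ) + 1) u → χ u = 0)
    (hnonvan : ∃ u : K, w.IsUnit₁ (n : ℤ) u ∧ χ u ≠ 0) (hχπ : χ π = 0)
    {e₁ e₂ : K} (he₁ : e₁ ≠ 0) (hee : e₁ ≠ e₂) (hval : w.v (e₁ - e₂) = w.v e₁ + 2 * (n : ℤ))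
    (hχe₁ : χ e₁ = 0) :
    ∃ x : K, x ≠ 0 ∧ x ≠ e₁ ∧ x ≠ e₂ ∧
      χ x = 1 ∧ χ (x - e₁) = 0 ∧ χ (x - e₂) = 1 ∧
      χ (x * (x - e₁) * (x - e₂)) = 0 := by
  have hvπ : w.toValuation (π ^ n) = exp (-(n : ℤ)) := by
    rw [map_pow, w.toValuation_apply hπ0, hπ, ← exp_nsmul]
    simp
  have hvd : w.toValuation ((e₁ - e₂) / e₁) = w.toValuation (π ^ n) ^ 2 := by
    rw [map_div₀, w.toValuation_apply (sub_ne_zero.2 hee), w.toValuation_apply he₁, hval, hvπ,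
      ← exp_sub, ← exp_nsmul]
    congr 1
    ring
  obtain ⟨y, hy, h1y, hyd, hχy, hχ1y, hχyd⟩ :=
    exists_map_one_add_eq_one_and_map_add_eq_one (v := w.toValuation) hχ (pow_ne_zero n hπ0)
      (by rw [hvπ, ← exp_zero, exp_lt_exp]; omega)
      (by rw [map_pow_eq_nsmul hχ hπ0, hχπ, nsmul_zero])
      (fun u hu ↦ hvan u (w.isUnit₁_add_one_iff_toValuation_lt.2 (hvπ ▸ hu)))
      (by simpa only [DValuation.isUnit₁_iff_toValuation_le, hvπ] using hnonvan) hvd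
  have hχ_mul {z : K} (hz : z ≠ 0) : χ (e₁ * z) = χ z := by rw [hχ he₁ hz, hχe₁, zero_add]
  have hx : e₁ * (1 + y) ≠ 0 := mul_ne_zero he₁ h1y
  have hx₁ : e₁ * (1 + y) - e₁ = e₁ * y := by ring
  have hx₂ : e₁ * (1 + y) - e₂ = e₁ * (y + (e₁ - e₂) / e₁) := by field_simp; ring
  have hx₁0 : e₁ * y ≠ 0 := mul_ne_zero he₁ hy
  have hx₂0 : e₁ * (y + (e₁ - e₂) / e₁) ≠ 0 := mul_ne_zero he₁ hyd
  refine ⟨e₁ * (1 + y), hx, sub_ne_zero.1 (hx₁ ▸ hx₁0), sub_ne_zero.1 (hx₂ ▸ hx₂0), ?_⟩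
  rw [hx₁, hx₂, hχ (mul_ne_zero hx hx₁0) hx₂0, hχ hx hx₁0, hχ_mul h1y, hχ_mul hy, hχ_mul hyd,
    hχ1y, hχy, hχyd]
  decide

/-- The construction in case (iii) of Proposition 4 when `v(e₁−e₂) = 2n`:
`χ : K^× → ℤ/2ℤ` a homomorphism vanishing on `U_{n+1}` but not identically on
`U_n` (`n ≥ 1`), with `χ(π) = 0`; `e₁, e₂` distinct `1`-units with
`v(e₁−e₂) = 2n` and `χ(e₁) = 0`.  Then there is `x ∈ K ∖ {0, e₁, e₂}` with
`χ(x) = 1`, `χ(x−e₁) = 0`, `χ(x−e₂) = 1`; in particular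
`χ(x(x−e₁)(x−e₂)) = 0`. -/
theorem chatelet_case_iii_valuation_two_n
    (K : Type*) [Field K] [Algebra ℚ_[2] K] [FiniteDimensional ℚ_[2] K]
    (w : DValuation K)
    (hext : ∀ x : ℚ_[2], x ≠ 0 →
      w.v (algebraMap ℚ_[2] K x) = w.v (algebraMap ℚ_[2] K 2) * x.valuation)
    (π : K) (hπ0 : π ≠ 0) (hπ : w.v π = 1)
    (χ : K → ZMod 2)
    (hχ : ∀ ⦃x y : K⦄, x ≠ 0 → y ≠ 0 → χ (x * y) = χ x + χ y)
    (n : ℕ) (hn : 1 ≤ n)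
    (hvan : ∀ u : K, w.IsUnit₁ ((n : ℤ) + 1) u → χ u = 0)
    (hnonvan : ∃ u : K, w.IsUnit₁ (n : ℤ) u ∧ χ u ≠ 0)
    (hχπ : χ π = 0)
    (e₁ e₂ : K) (he₁ : w.IsUnit₁ 1 e₁) (he₂ : w.IsUnit₁ 1 e₂) (hee : e₁ ≠ e₂)
    (hval : w.v (e₁ - e₂) = 2 * (n : ℤ))
    (hχe₁ : χ e₁ = 0) :
    ∃ x : K, x ≠ 0 ∧ x ≠ e₁ ∧ x ≠ e₂ ∧
      χ x = 1 ∧ χ (x - e₁) = 0 ∧ χ (x - e₂) = 1 ∧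
      χ (x * (x - e₁) * (x - e₂)) = 0 := by
  have hA := DValuation.algebraMap_mem_valuationSubring_iff (p := 2) hext
  have := charP_residueField_of_algebraMap_mem_iff hA
  have := finite_residueField_of_algebraMap_mem_iff hA
  exact chatelet_case_iii_valuation_two_n_general w hπ0 hπ hχ hn hvan hnonvan hχπ he₁.ne_zero
    hee (by rw [hval, he₁.v_eq_zero, zero_add]) hχe₁
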